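/- arXiv:1808.03764 — 3 statements merged into one kernel-verified Lean document; each statement's English description precedes it below -/
import Mathlib

section
/- For every n ≥ 0, Σ_{σ ∈ S_n(321)} q^{exc(σ)} p^{crs(σ)} = C_n(q,p) as polynomials in q and p, where C_n(q,p) are the q,p-Catalan polynomials of Randrianarivony. -/
open Equiv Finset

/-- Number of crossings of a permutation of `Fin n` (0-indexed version of the
classical definition on `[n] = {1,…,n}`): pairs `(i,j)` with
`i<j<σ(i)<σ(j)` or `σ(i)<σ(j)≤i<j`. -/
def crs {n : ℕ} (σ : Equiv.Perm (Fin n)) : ℕ :=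
  (Finset.univ.filter (fun q : Fin n × Fin n =>
    ((q.1 : ℕ) < q.2 ∧ (q.2 : ℕ) < σ q.1 ∧ (σ q.1 : ℕ) < σ q.2) ∨
    ((σ q.1 : ℕ) < σ q.2 ∧ (σ q.2 : ℕ) ≤ q.1 ∧ (q.1 : ℕ) < q.2))).card

/-- Number of nestings of a permutation of `Fin n`: pairs `(i,j)` with
`i<j<σ(j)<σ(i)` or `σ(j)<σ(i)≤i<j`. -/
def nes {n : ℕ} (σ : Equiv.Perm (Fin n)) : ℕ :=
  (Finset.univ.filter (fun q : Fin n × Fin n =>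
    ((q.1 : ℕ) < q.2 ∧ (q.2 : ℕ) < σ q.2 ∧ (σ q.2 : ℕ) < σ q.1) ∨
    ((σ q.2 : ℕ) < σ q.1 ∧ (σ q.1 : ℕ) ≤ q.1 ∧ (q.1 : ℕ) < q.2))).card

/-- Number of fixed points. -/
def fp {n : ℕ} (σ : Equiv.Perm (Fin n)) : ℕ :=
  (Finset.univ.filter (fun i : Fin n => σ i = i)).card

/-- Number of excedances. -/
def exc {n : ℕ} (σ : Equiv.Perm (Fin n)) : ℕ :=
  (Finset.univ.filter (fun i : Fin n => (i : ℕ) < σ i)).card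

/-- Number of inversions. -/
def invStat {n : ℕ} (σ : Equiv.Perm (Fin n)) : ℕ :=
  (Finset.univ.filter (fun q : Fin n × Fin n => q.1 < q.2 ∧ σ q.2 < σ q.1)).card

/-- `σ` contains the pattern `τ`: there is a strictly increasing choice of positions
on which `σ` is order-isomorphic to `τ`. -/
def Contains {n k : ℕ} (σ : Equiv.Perm (Fin n)) (τ : Equiv.Perm (Fin k)) : Prop :=
  ∃ f : Fin k → Fin n, StrictMono f ∧ ∀ a b : Fin k, σ (f a) < σ (f b) ↔ τ a < τ b

/-- `σ` avoids the pattern `τ`. -/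
def Avoids {n k : ℕ} (σ : Equiv.Perm (Fin n)) (τ : Equiv.Perm (Fin k)) : Prop :=
  ¬ Contains σ τ

/-- The pattern 123 (as a permutation of `Fin 3`, 0-indexed). -/
def p123 : Equiv.Perm (Fin 3) := 1
/-- The pattern 132. -/
def p132 : Equiv.Perm (Fin 3) := Equiv.swap 1 2
/-- The pattern 213. -/
def p213 : Equiv.Perm (Fin 3) := Equiv.swap 0 1
/-- The pattern 321. -/
def p321 : Equiv.Perm (Fin 3) := Equiv.swap 0 2
/-- The pattern 231. -/
def p231 : Equiv.Perm (Fin 3) := Equiv.swap 0 2 * Equiv.swap 0 1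
/-- The pattern 312. -/
def p312 : Equiv.Perm (Fin 3) := Equiv.swap 0 2 * Equiv.swap 1 2

open MvPolynomial in
/-- The q,p-Catalan polynomials of Randrianarivony, as polynomials in two variables
`q = X true` and `p = X false`:
`C 0 = C 1 = 1` and `C (n+2) = C (n+1) + q * Σ_{k=0}^{n} p^k C k C (n+1-k)`. -/
noncomputable def qpCatalan : ℕ → MvPolynomial Bool ℤ
  | 0 => 1
  | 1 => 1
  | n + 2 => qpCatalan (n + 1) + (X true : MvPolynomial Bool ℤ) *
      ∑ k ∈ (Finset.range (n + 1)).attach,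
        (X false : MvPolynomial Bool ℤ) ^ (k : ℕ) * qpCatalan k * qpCatalan (n + 1 - k)
  termination_by n => n
  decreasing_by
  · omega
  · have := Finset.mem_range.mp k.2; omega
  · omega

section GeneratingTree

variable {R : Type*} [CommRing R]

/-- Total weight of the `n`-step descendants of a node labelled `a` in the generating tree in which
`a` has the children `a + 1`, of weight `1`, and `v + 1` for `v < a`, of weight `q * p ^ v`. -/
def treeWeight (q p : R) : ℕ → ℕ → R
  | 0, _ => 1
  | n + 1, a => treeWeight q p n (a + 1) +
      ∑ v ∈ range a, q * p ^ v * treeWeight q p n (v + 1)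

open PowerSeries in
/-- Generating function of `treeWeight` with respect to the number of steps. -/
noncomputable def treeSeries (q p : R) (a : ℕ) : R⟦X⟧ :=
  PowerSeries.mk fun n => treeWeight q p n a

open PowerSeries in
/-- The quotient of `treeSeries q p (a + 1)` by `treeSeries q p 1`, see `treeSeries_succ`. -/
noncomputable def treeFactor (q p : R) (a : ℕ) : R⟦X⟧ :=
  1 + X * ∑ v ∈ range a, C (q * p ^ (v + 1)) * rescale p (treeSeries q p (v + 1))

open PowerSeries in
lemma treeSeries_eq (q p : R) (a : ℕ) :
    treeSeries q p a = 1 + X * (treeSeries q p (a + 1) +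
      ∑ v ∈ range a, C (q * p ^ v) * treeSeries q p (v + 1)) := by
  ext n
  cases n with
  | zero => simp [treeSeries, treeWeight]
  | succ n =>
    simp [treeSeries, treeWeight, coeff_succ_X_mul, coeff_one, coeff_C_mul, -map_mul, -map_pow]

open PowerSeries in
lemma treeSeries_succ_sub (q p : R) (a : ℕ) :
    treeSeries q p (a + 1) - treeSeries q p a =
      X * (treeSeries q p (a + 2) - treeSeries q p (a + 1) +
        C (q * p ^ a) * treeSeries q p (a + 1)) := by
  have h := treeSeries_eq q p a
  have h' := treeSeries_eq q p (a + 1)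
  rw [sum_range_succ] at h'
  linear_combination h' - h

open PowerSeries in
lemma treeFactor_succ_sub (q p : R) (a : ℕ) :
    treeFactor q p (a + 1) - treeFactor q p a =
      X * (C (q * p ^ (a + 1)) * rescale p (treeSeries q p (a + 1))) := by
  simp only [treeFactor, sum_range_succ]
  ring

open PowerSeries in
lemma rescale_treeSeries (q p : R) (a : ℕ) :
    rescale p (treeSeries q p a) =
      treeFactor q p a + C p * X * rescale p (treeSeries q p (a + 1)) := by
  conv_lhs => rw [treeSeries_eq]
  have hC (c : R) : rescale p (C c) = C c := by
    ext n
    rw [coeff_rescale, coeff_C]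
    split_ifs with h <;> simp [h]
  simp only [map_add, map_one, map_mul, map_sum, rescale_X, hC, treeFactor, pow_succ]
  rw [mul_add, mul_sum, mul_sum]
  have : ∀ v ∈ range a, C p * X * (C q * C (p ^ v) * rescale p (treeSeries q p (v + 1))) =
      X * (C q * (C (p ^ v) * C p) * rescale p (treeSeries q p (v + 1))) := by
    intros; ring
  rw [sum_congr rfl this]
  ring

open PowerSeries in
lemma treeSeries_succ (q p : R) (a : ℕ) :
    treeSeries q p (a + 1) = treeSeries q p 1 * treeFactor q p a := by
  have hrec : ∀ a, (treeSeries q p (a + 2) - treeSeries q p 1 * treeFactor q p (a + 1)) -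
      (treeSeries q p (a + 1) - treeSeries q p 1 * treeFactor q p a) =
      X * ((treeSeries q p (a + 3) - treeSeries q p 1 * treeFactor q p (a + 2)) -
        (treeSeries q p (a + 2) - treeSeries q p 1 * treeFactor q p (a + 1)) +
        C (q * p ^ (a + 1)) *
          (treeSeries q p (a + 2) - treeSeries q p 1 * treeFactor q p (a + 1))) := by
    intro a
    have h₁ := treeSeries_succ_sub q p (a + 1)
    have h₂ := treeFactor_succ_sub q p a
    have h₃ := treeFactor_succ_sub q p (a + 1)
    have h₄ := rescale_treeSeries q p (a + 1)
    have h₅ : C (q * p ^ (a + 1 + 1)) = C (q * p ^ (a + 1)) * C p := by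
      rw [← map_mul, pow_succ p (a + 1), mul_assoc]
    rw [h₅] at h₃
    linear_combination h₁ - treeSeries q p 1 * h₂ + X * treeSeries q p 1 * h₃ -
      treeSeries q p 1 * X * C (q * p ^ (a + 1)) * h₄
  have hzero : treeSeries q p 1 - treeSeries q p 1 * treeFactor q p 0 = 0 := by
    simp [treeFactor]
  have hcoeff : ∀ n a,
      coeff n (treeSeries q p (a + 1) - treeSeries q p 1 * treeFactor q p a) = 0 := by
    intro n
    induction n with
    | zero =>
      intro a
      induction a with
      | zero => rw [hzero, map_zero]
      | succ a ih =>
        have h := congrArg (coeff 0) (hrec a)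
        rwa [map_sub, ih, coeff_zero_X_mul, sub_zero] at h
    | succ n ihn =>
      intro a
      induction a with
      | zero => rw [hzero, map_zero]
      | succ a ih =>
        have h := congrArg (coeff (n + 1)) (hrec a)
        rw [map_sub, ih, coeff_succ_X_mul, sub_zero, map_add, map_sub _ (_ - _), coeff_C_mul] at h
        rw [h, ihn (a + 2), ihn (a + 1)]
        simp
  rw [← sub_eq_zero]
  ext n
  rw [hcoeff, map_zero]

open PowerSeries in
lemma treeWeight_succ_one (q p : R) (n : ℕ) :
    treeWeight q p (n + 1) 1 = treeWeight q p n 1 + q * (treeWeight q p n 1 +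
      ∑ k ∈ range n, p ^ (k + 1) * treeWeight q p k 1 * treeWeight q p (n - 1 - k) 1) := by
  have h : treeWeight q p n 2 = treeWeight q p n 1 +
      q * ∑ k ∈ range n, p ^ (k + 1) * treeWeight q p k 1 * treeWeight q p (n - 1 - k) 1 := by
    have h := congrArg (coeff n) (treeSeries_succ q p 1)
    rw [treeFactor, mul_add, mul_one, mul_left_comm, sum_range_one] at h
    cases n with
    | zero => simp [treeWeight]
    | succ n =>
      rw [map_add, coeff_succ_X_mul, mul_left_comm, coeff_C_mul, mul_comm (treeSeries q p 1),
        coeff_mul, Nat.sum_antidiagonal_eq_sum_range_succ_mk] at h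
      simp only [treeSeries, coeff_mk, coeff_rescale] at h
      rw [h, zero_add, pow_one, mul_assoc, mul_sum]
      refine congrArg _ (congrArg _ (sum_congr rfl fun k _ => ?_))
      rw [show n + 1 - 1 - k = n - k by omega]
      ring
  rw [treeWeight, sum_range_one, h]
  ring

end GeneratingTree

lemma treeWeight_eq_qpCatalan (n : ℕ) :
    treeWeight (MvPolynomial.X true : MvPolynomial Bool ℤ) (MvPolynomial.X false) n 0 =
      qpCatalan n := by
  induction n using Nat.strong_induction_on with
  | _ n ih =>
    have hone : ∀ k, k + 1 < n → treeWeight (MvPolynomial.X true : MvPolynomial Bool ℤ)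
        (MvPolynomial.X false) k 1 = qpCatalan (k + 1) := by
      intro k hk
      rw [← ih (k + 1) hk]
      simp [treeWeight]
    match n with
    | 0 => simp [treeWeight, qpCatalan]
    | 1 => simp [treeWeight, qpCatalan]
    | n + 2 =>
      rw [treeWeight, sum_range_zero, add_zero, treeWeight_succ_one, hone n (by omega), qpCatalan,
        sum_attach (range (n + 1)) fun k => (MvPolynomial.X false : MvPolynomial Bool ℤ) ^ k *
          qpCatalan k * qpCatalan (n + 1 - k), sum_range_succ']
      have hsum : ∀ k ∈ range n, (MvPolynomial.X false : MvPolynomial Bool ℤ) ^ (k + 1) *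
          treeWeight (MvPolynomial.X true) (MvPolynomial.X false) k 1 *
          treeWeight (MvPolynomial.X true) (MvPolynomial.X false) (n - 1 - k) 1 =
          (MvPolynomial.X false : MvPolynomial Bool ℤ) ^ (k + 1) * qpCatalan (k + 1) *
          qpCatalan (n + 1 - (k + 1)) := by
        intro k hk
        have hk := mem_range.1 hk
        rw [hone k (by omega), hone (n - 1 - k) (by omega),
          show n - 1 - k + 1 = n + 1 - (k + 1) by omega]
      rw [sum_congr rfl hsum]
      simp [qpCatalan, add_comm]

section Insertion

variable {n : ℕ}

/-- The permutation with first value `v` whose remaining values are order-isomorphic to `σ`. -/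
def consPerm (v : Fin (n + 1)) (σ : Perm (Fin n)) : Perm (Fin (n + 1)) :=
  ((finSuccEquiv' 0).trans (optionCongr σ)).trans (finSuccEquiv' v).symm

@[simp]
lemma consPerm_zero (v : Fin (n + 1)) (σ : Perm (Fin n)) : consPerm v σ 0 = v := by
  simp [consPerm]

@[simp]
lemma consPerm_succ (v : Fin (n + 1)) (σ : Perm (Fin n)) (i : Fin n) :
    consPerm v σ i.succ = v.succAbove (σ i) := by
  simp [consPerm, finSuccEquiv'_zero]

lemma consPerm_bijective :
    Function.Bijective fun x : Fin (n + 1) × Perm (Fin n) => consPerm x.1 x.2 := by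
  rw [Fintype.bijective_iff_injective_and_card]
  refine ⟨?_, by simp [Fintype.card_perm, Nat.factorial_succ]⟩
  rintro ⟨v, σ⟩ ⟨w, τ⟩ h
  have hv : v = w := by simpa using congrArg (fun π => π 0) h
  subst hv
  have hσ : σ = τ := by
    ext i
    have := congrArg (fun π => π i.succ) h
    simp only [consPerm_succ] at this
    rw [Fin.succAbove_right_injective this]
  rw [hσ]

lemma coe_succAbove (v : Fin (n + 1)) (x : Fin n) :
    (v.succAbove x : ℕ) = if (x : ℕ) < v then (x : ℕ) else x + 1 := by
  simp only [Fin.succAbove, Fin.lt_def, Fin.val_castSucc]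
  split_ifs <;> simp

lemma avoids_p321_iff (σ : Perm (Fin n)) :
    Avoids σ p321 ↔ ∀ i j k, i < j → j < k → σ j < σ i → ¬ σ k < σ j := by
  constructor
  · intro h i j k hij hjk hji hkj
    refine h ⟨![i, j, k], ?_, ?_⟩
    · rw [Fin.strictMono_iff_lt_succ]
      intro a
      fin_cases a <;> simpa
    · have hki := hkj.trans hji
      have e0 : p321 0 = 2 := by decide
      have e1 : p321 1 = 1 := by decide
      have e2 : p321 2 = 0 := by decide
      intro a b
      fin_cases a <;> fin_cases b <;>
        simp [e0, e1, e2, hkj, hji, hki, hkj.le, hji.le, hki.le]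
  · rintro h ⟨f, hf, hfσ⟩
    exact h (f 0) (f 1) (f 2) (hf (by decide)) (hf (by decide)) ((hfσ 1 0).2 (by decide))
      ((hfσ 2 1).2 (by decide))

/-- The values of `σ` smaller than `a` appear in increasing order. -/
def SmallIncreasing (σ : Perm (Fin n)) (a : ℕ) : Prop :=
  ∀ i j, i < j → (σ i : ℕ) < a → σ i < σ j

open scoped Classical in
/-- The largest `a ≤ n` such that the values of `σ` smaller than `a` appear in increasing order. -/
noncomputable def treeLabel (σ : Perm (Fin n)) : ℕ :=
  Nat.findGreatest (SmallIncreasing σ) n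

lemma SmallIncreasing.mono {σ : Perm (Fin n)} {a b : ℕ} (h : SmallIncreasing σ b) (hab : a ≤ b) :
    SmallIncreasing σ a :=
  fun i j hij ha => h i j hij (ha.trans_le hab)

lemma le_treeLabel_iff (σ : Perm (Fin n)) (a : ℕ) :
    a ≤ treeLabel σ ↔ a ≤ n ∧ SmallIncreasing σ a := by
  classical
  constructor
  · intro h
    refine ⟨h.trans (Nat.findGreatest_le n), SmallIncreasing.mono ?_ h⟩
    exact Nat.findGreatest_spec (P := SmallIncreasing σ) (Nat.zero_le n)
      fun i j _ hi => absurd hi (Nat.not_lt_zero _)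
  · rintro ⟨h, h'⟩
    exact Nat.le_findGreatest h h'

lemma SmallIncreasing.apply_le {σ : Perm (Fin n)} {a : ℕ} (h : SmallIncreasing σ a) {j : Fin n}
    (hj : (σ j : ℕ) < a) : σ j ≤ j := by
  have hcard : (Iio (σ j)).card ≤ (Iio j).card := by
    refine card_le_card_of_injOn σ.symm ?_ σ.symm.injective.injOn
    intro u hu
    rw [mem_coe, mem_Iio] at hu ⊢
    by_contra hle
    have hne : j ≠ σ.symm u := by
      rintro rfl
      simp at hu
    have := h j (σ.symm u) (lt_of_le_of_ne (not_lt.1 hle) hne) hj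
    rw [apply_symm_apply] at this
    exact lt_asymm hu this
  simpa using hcard

lemma avoids_consPerm_iff (v : Fin (n + 1)) (σ : Perm (Fin n)) :
    Avoids (consPerm v σ) p321 ↔ Avoids σ p321 ∧ SmallIncreasing σ v := by
  simp only [avoids_p321_iff]
  constructor
  · refine fun h => ⟨fun i j k hij hjk hji hkj => ?_, fun i j hij hi => ?_⟩
    · exact h i.succ j.succ k.succ (Fin.succ_lt_succ_iff.2 hij) (Fin.succ_lt_succ_iff.2 hjk)
        (by simpa using hji) (by simpa using hkj)
    · by_contra hlt
      have hne : σ j ≠ σ i := fun e => hij.ne' (σ.injective e)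
      refine h 0 i.succ j.succ (Fin.succ_pos i) (Fin.succ_lt_succ_iff.2 hij) ?_ ?_
      · simp [Fin.lt_def, coe_succAbove, hi]
      · simpa using lt_of_le_of_ne (not_lt.1 hlt) hne
  · rintro ⟨hσ, hv⟩ i j k hij hjk hji hkj
    obtain ⟨j, rfl⟩ := Fin.exists_succ_eq.2 (Fin.ne_zero_of_lt hij)
    obtain ⟨k, rfl⟩ := Fin.exists_succ_eq.2 (Fin.ne_zero_of_lt hjk)
    rw [Fin.succ_lt_succ_iff] at hjk
    simp only [consPerm_succ, Fin.succAbove_lt_succAbove_iff] at hji hkj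
    cases i using Fin.cases with
    | zero =>
      rw [consPerm_zero, Fin.lt_def, coe_succAbove] at hji
      have : (σ j : ℕ) < v := by
        split_ifs at hji <;> omega
      exact lt_asymm hkj (hv j k hjk this)
    | succ i =>
      simp only [consPerm_succ, Fin.succAbove_lt_succAbove_iff] at hji
      exact hσ i j k (Fin.succ_lt_succ_iff.1 hij) hjk hji hkj

lemma smallIncreasing_consPerm_zero_iff (σ : Perm (Fin n)) (a : ℕ) :
    SmallIncreasing (consPerm 0 σ) (a + 1) ↔ SmallIncreasing σ a := by
  constructor
  · intro h i j hij hi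
    simpa using h i.succ j.succ (Fin.succ_lt_succ_iff.2 hij) (by simpa using hi)
  · intro h i j hij hi
    obtain ⟨j, rfl⟩ := Fin.exists_succ_eq.2 (Fin.ne_zero_of_lt hij)
    cases i using Fin.cases with
    | zero => simp
    | succ i => simpa using h i j (Fin.succ_lt_succ_iff.1 hij) (by simpa using hi)

lemma treeLabel_consPerm_zero (σ : Perm (Fin n)) :
    treeLabel (consPerm 0 σ) = treeLabel σ + 1 := by
  refine eq_of_forall_le_iff fun a => ?_
  cases a with
  | zero => simp
  | succ a =>
    rw [le_treeLabel_iff, smallIncreasing_consPerm_zero_iff, Nat.add_le_add_iff_right,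
      Nat.add_le_add_iff_right, le_treeLabel_iff]

lemma treeLabel_consPerm_succ {σ : Perm (Fin n)} {v : Fin n} (h : SmallIncreasing σ (v + 1)) :
    treeLabel (consPerm v.succ σ) = v + 1 := by
  apply le_antisymm
  · by_contra hlt
    have hinc := ((le_treeLabel_iff _ _).1 (Nat.succ_le_of_lt (not_le.1 hlt))).2
    have := hinc 0 (σ.symm v).succ (Fin.succ_pos _) (by simp)
    simp [Fin.lt_def] at this
  · refine (le_treeLabel_iff _ _).2 ⟨by omega, fun i j hij hi => ?_⟩
    obtain ⟨j, rfl⟩ := Fin.exists_succ_eq.2 (Fin.ne_zero_of_lt hij)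
    cases i using Fin.cases with
    | zero => simp at hi
    | succ i =>
      rw [consPerm_succ, coe_succAbove, Fin.val_succ] at hi
      simp only [consPerm_succ, Fin.succAbove_lt_succAbove_iff]
      refine h i j (Fin.succ_lt_succ_iff.1 hij) ?_
      split_ifs at hi <;> omega

lemma exc_consPerm {v : Fin (n + 1)} {σ : Perm (Fin n)} (h : SmallIncreasing σ v) :
    exc (consPerm v σ) = exc σ + if (0 : ℕ) < v then 1 else 0 := by
  simp only [exc, card_filter, Fin.sum_univ_succ, consPerm_zero, consPerm_succ, Fin.val_zero,
    Fin.val_succ, coe_succAbove]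
  rw [add_comm]
  congr 1
  refine sum_congr rfl fun i _ => ?_
  by_cases hi : (σ i : ℕ) < v
  · have := Fin.le_def.1 (h.apply_le hi)
    rw [if_pos hi, if_neg (by omega), if_neg (by omega)]
  · simp [hi]

/-- The pair `(i, j)` is a crossing of `σ`. -/
def IsCrossing (σ : Perm (Fin n)) (i j : Fin n) : Prop :=
  ((i : ℕ) < j ∧ (j : ℕ) < σ i ∧ (σ i : ℕ) < σ j) ∨ ((σ i : ℕ) < σ j ∧ (σ j : ℕ) ≤ i ∧ (i : ℕ) < j)

instance (σ : Perm (Fin n)) (i j : Fin n) : Decidable (IsCrossing σ i j) :=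
  inferInstanceAs (Decidable (_ ∨ _))

lemma crs_eq_sum (σ : Perm (Fin n)) : crs σ = ∑ i, ∑ j, if IsCrossing σ i j then 1 else 0 := by
  rw [crs, card_filter, Fintype.sum_prod_type]
  rfl

lemma ite_isCrossing_consPerm_succ {v : Fin (n + 1)} {σ : Perm (Fin n)} (h : SmallIncreasing σ v)
    (i j : Fin n) :
    (if IsCrossing (consPerm v σ) i.succ j.succ then 1 else 0) =
      (if IsCrossing σ i j then 1 else 0) +
        if (σ j : ℕ) = i + 1 then (if (i : ℕ) + 1 < v ∧ (σ i : ℕ) < v then 1 else 0) else 0 := by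
  have hi : (σ i : ℕ) < v → (σ i : ℕ) ≤ i := fun h' => h.apply_le h'
  have hj : (σ j : ℕ) < v → (σ j : ℕ) ≤ j := fun h' => h.apply_le h'
  have hcross : IsCrossing (consPerm v σ) i.succ j.succ ↔ IsCrossing σ i j ∨
      ((σ j : ℕ) = i + 1 ∧ (i : ℕ) + 1 < v ∧ (σ i : ℕ) < v) := by
    simp only [IsCrossing, consPerm_succ, coe_succAbove, Fin.val_succ]
    split_ifs <;> omega
  have hdisj : IsCrossing σ i j → (σ i : ℕ) < v → (σ j : ℕ) ≠ i + 1 := by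
    simp only [IsCrossing]
    omega
  rw [if_congr hcross rfl rfl, ← ite_and]
  by_cases hσ : IsCrossing σ i j
  · rw [if_pos (Or.inl hσ), if_pos hσ, if_neg fun h' => hdisj hσ h'.2.2 h'.1]
  · simp only [hσ, false_or, if_false, zero_add]

lemma crs_consPerm {v : Fin (n + 1)} {σ : Perm (Fin n)} (h : SmallIncreasing σ v) :
    crs (consPerm v σ) = crs σ + (v - 1) := by
  have hzero : ∀ i, ¬ IsCrossing (consPerm v σ) i 0 := by
    intro i hi
    simp [IsCrossing] at hi
  have hfirst : ∀ j : Fin n, IsCrossing (consPerm v σ) 0 j.succ ↔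
      (j : ℕ) + 1 < v ∧ ¬ (σ j : ℕ) < v := by
    intro j
    simp only [IsCrossing, consPerm_succ, consPerm_zero, coe_succAbove, Fin.val_succ, Fin.val_zero]
    split_ifs <;> omega
  have hnew : ∀ i : Fin n, (∑ j : Fin n, if (σ j : ℕ) = i + 1 then
      (if (i : ℕ) + 1 < v ∧ (σ i : ℕ) < v then 1 else 0) else 0) =
      if (i : ℕ) + 1 < v ∧ (σ i : ℕ) < v then 1 else 0 := by
    intro i
    by_cases hi : (i : ℕ) + 1 < v ∧ (σ i : ℕ) < v
    · have hin : (i : ℕ) + 1 < n := by omega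
      rw [if_pos hi, sum_eq_single (σ.symm ⟨i + 1, hin⟩)]
      · simp
      · intro j _ hj
        rw [if_neg]
        intro hij
        apply hj
        rw [eq_symm_apply]
        exact Fin.ext hij
      · simp
    · simp [hi]
  have hcount : (∑ j : Fin n, if (j : ℕ) + 1 < v then 1 else 0) = (v : ℕ) - 1 := by
    rw [Fin.sum_univ_eq_sum_range (fun j => if j + 1 < (v : ℕ) then 1 else 0) n, ← card_filter]
    rw [show (range n).filter (fun j => j + 1 < (v : ℕ)) = range (v - 1) by
      ext j
      simp only [mem_filter, mem_range]
      omega, card_range]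
  rw [crs_eq_sum, crs_eq_sum]
  simp only [Fin.sum_univ_succ (n := n), hzero, hfirst, ite_isCrossing_consPerm_succ h, if_false,
    zero_add, sum_add_distrib, hnew]
  rw [← hcount, add_left_comm, ← sum_add_distrib]
  congr 1
  refine sum_congr rfl fun j _ => ?_
  split_ifs <;> omega

open scoped Classical in
lemma sum_avoids_succ {R : Type*} [CommRing R] (q p : R) (f : ℕ → R) :
    ∑ τ : Perm (Fin (n + 1)) with Avoids τ p321, q ^ exc τ * p ^ crs τ * f (treeLabel τ) =
      ∑ σ : Perm (Fin n) with Avoids σ p321, q ^ exc σ * p ^ crs σ *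
        (f (treeLabel σ + 1) + ∑ v ∈ range (treeLabel σ), q * p ^ v * f (v + 1)) := by
  rw [sum_filter, sum_filter, ← consPerm_bijective.sum_comp, Fintype.sum_prod_type_right]
  refine sum_congr rfl fun σ _ => ?_
  by_cases hσ : Avoids σ p321
  · have hinc : SmallIncreasing σ 0 := fun i j _ hi => absurd hi (Nat.not_lt_zero _)
    have hlabel : range (treeLabel σ) = {v ∈ range n | SmallIncreasing σ (v + 1)} := by
      ext v
      rw [mem_range, mem_filter, mem_range, ← Nat.succ_le_iff, le_treeLabel_iff, Nat.succ_le_iff]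
    rw [Fin.sum_univ_succ, if_pos hσ, hlabel, sum_filter, mul_add, mul_sum,
      ← Fin.sum_univ_eq_sum_range (fun v => q ^ exc σ * p ^ crs σ *
        if SmallIncreasing σ (v + 1) then q * p ^ v * f (v + 1) else 0)]
    congr 1
    · rw [if_pos ((avoids_consPerm_iff _ _).2 ⟨hσ, hinc⟩), treeLabel_consPerm_zero,
        exc_consPerm hinc, crs_consPerm hinc]
      simp
    · refine sum_congr rfl fun v _ => ?_
      by_cases hv : SmallIncreasing σ (v + 1)
      · rw [if_pos ((avoids_consPerm_iff _ _).2 ⟨hσ, hv⟩), if_pos hv, treeLabel_consPerm_succ hv,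
          exc_consPerm hv, crs_consPerm hv, if_pos (by simp), Fin.val_succ, Nat.add_sub_cancel]
        ring
      · rw [if_neg fun h => hv ((avoids_consPerm_iff _ _).1 h).2, if_neg hv, mul_zero]
  · rw [if_neg hσ]
    exact sum_eq_zero fun v _ => if_neg fun h => hσ ((avoids_consPerm_iff _ _).1 h).1

open scoped Classical in
lemma sum_avoids_treeWeight {R : Type*} [CommRing R] (q p : R) (n m : ℕ) :
    ∑ σ : Perm (Fin n) with Avoids σ p321,
      q ^ exc σ * p ^ crs σ * treeWeight q p m (treeLabel σ) = treeWeight q p (n + m) 0 := by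
  induction n generalizing m with
  | zero =>
    have h : Avoids (1 : Perm (Fin 0)) p321 := (avoids_p321_iff _).2 fun i => i.elim0
    rw [sum_filter, Fintype.sum_unique, if_pos (by convert h; exact Subsingleton.elim _ _)]
    simp [exc, crs, treeLabel]
  | succ n ih =>
    rw [sum_avoids_succ, Nat.add_right_comm, add_assoc, ← ih (m + 1)]
    rfl

end Insertion

open scoped Classical in
open MvPolynomial in
/-- `Σ_{σ ∈ S_n(321)} q^{exc σ} p^{crs σ} = C_n(q,p)`. -/
theorem sum_exc_crs_avoid321_eq_qpCatalan (n : ℕ) :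
    ∑ σ ∈ Finset.univ.filter (fun σ : Equiv.Perm (Fin n) => Avoids σ p321),
      (X true : MvPolynomial Bool ℤ) ^ (exc σ) * (X false : MvPolynomial Bool ℤ) ^ (crs σ)
      = qpCatalan n := by
  rw [← treeWeight_eq_qpCatalan, ← add_zero n, ← sum_avoids_treeWeight]
  simp [treeWeight]
end

section
/- For every 321-avoiding permutation σ of [n], the number of inversions equals the number of crossings plus the number of excedances: inv(σ) = crs(σ) + exc(σ). -/
open Equiv Finset

theorem Avoids.not_decreasing_triple {n : ℕ} {σ : Equiv.Perm (Fin n)} (h : Avoids σ p321)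
    {i j k : Fin n} (hij : i < j) (hjk : j < k) (hσij : σ j < σ i) (hσjk : σ k < σ j) : False := by
  refine h ⟨![i, j, k], ?_, ?_⟩
  · intro a b hab
    fin_cases a <;> fin_cases b <;> simp_all
    exact hij.trans hjk
  · have h02 : p321 0 = 2 := by decide
    have h11 : p321 1 = 1 := by decide
    have h20 : p321 2 = 0 := by decide
    have hσik := hσjk.trans hσij
    intro a b
    fin_cases a <;> fin_cases b <;>
      simp [h02, h11, h20, hσij, hσjk, hσik, hσij.le, hσjk.le, hσik.le]

theorem card_filter_apply_lt {n : ℕ} (σ : Equiv.Perm (Fin n)) (i : Fin n) :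
    #{j | σ j < i} = (i : ℕ) := by
  rw [← Fin.card_Iio i]
  exact card_bij (fun j _ => σ j) (by simp) (by simp)
    fun b hb => ⟨σ.symm b, by simpa using hb, by simp⟩

theorem card_filter_lt {n : ℕ} (i : Fin n) : #{j | j < i} = (i : ℕ) :=
  card_filter_apply_lt 1 i

theorem card_filter_lt_and_le {n : ℕ} (i k : Fin n) :
    #{m | i < m ∧ m ≤ k} = (k : ℕ) - i := by
  rw [← Fin.card_Ioc]
  congr 1
  ext m
  simp

/-- The arcs of `σ` passing over a point from left to right and from right to left are
equinumerous. -/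
theorem card_filter_le_lt_apply {n : ℕ} (σ : Equiv.Perm (Fin n)) (m : Fin n) :
    #{i | σ i ≤ m ∧ m < i} = #{i | i ≤ m ∧ m < σ i} := by
  have hcard : #{i | σ i ≤ m} = #{i | i ≤ m} :=
    card_bij (fun j _ => σ j) (by simp) (by simp)
      fun b hb => ⟨σ.symm b, by simpa using hb, by simp⟩
  convert card_sdiff_comm hcard using 2 <;> ext i <;> simp

section Avoids321

variable {n : ℕ} {σ : Equiv.Perm (Fin n)}

/-- In a 321-avoiding permutation, the positions of the values below `σ i` and the positions
before `i` are comparable sets. -/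
theorem Avoids.subset_or_subset (h : Avoids σ p321) (i : Fin n) :
    univ.filter (fun j => σ j < σ i) ⊆ univ.filter (fun j => j < i) ∨
      univ.filter (fun j => j < i) ⊆ univ.filter (fun j => σ j < σ i) := by
  by_contra! hc
  obtain ⟨⟨k, hk, hki⟩, ⟨j, hj, hji⟩⟩ := And.imp not_subset.1 not_subset.1 hc
  simp only [mem_filter, mem_univ, true_and, not_lt] at hk hki hj hji
  have hik : i < k := lt_of_le_of_ne hki (by rintro rfl; exact hk.false)
  have hσ : σ i < σ j := lt_of_le_of_ne hji (by simpa using hj.ne')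
  exact h.not_decreasing_triple hj hik hσ hk

theorem Avoids.subset_of_lt_apply (h : Avoids σ p321) {i : Fin n} (hi : i < σ i) :
    univ.filter (fun j => j < i) ⊆ univ.filter (fun j => σ j < σ i) := by
  refine (h.subset_or_subset i).resolve_left fun hs => ?_
  have := card_le_card hs
  rw [card_filter_apply_lt, card_filter_lt] at this
  exact absurd hi (by simpa using this)

theorem Avoids.subset_of_apply_le (h : Avoids σ p321) {i : Fin n} (hi : σ i ≤ i) :
    univ.filter (fun j => σ j < σ i) ⊆ univ.filter (fun j => j < i) := by
  refine (h.subset_or_subset i).elim id fun hs => ?_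
  refine (eq_of_subset_of_card_le hs ?_).ge
  rw [card_filter_apply_lt, card_filter_lt]
  exact hi

theorem Avoids.apply_lt_apply_of_lt_apply (h : Avoids σ p321) {i j : Fin n} (hj : j < σ j)
    (hij : i < j) : σ i < σ j := by
  simpa using h.subset_of_lt_apply hj (by simpa using hij)

theorem Avoids.apply_lt_apply_of_apply_le (h : Avoids σ p321) {i j : Fin n} (hi : σ i ≤ i)
    (hij : i < j) : σ i < σ j := by
  by_contra! hc
  have hlt : σ j < σ i := lt_of_le_of_ne hc (by simpa using hij.ne')
  have hji : j < i := by simpa using h.subset_of_apply_le hi (by simpa using hlt)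
  exact hij.asymm hji

theorem Avoids.card_inversions_at (h : Avoids σ p321) (i : Fin n) :
    #{j | i < j ∧ σ j < σ i} = #{m | i < m ∧ m ≤ σ i} := by
  rcases lt_or_ge i (σ i) with hi | hi
  · have hl : ({j | i < j ∧ σ j < σ i} : Finset (Fin n)) =
        univ.filter (fun j => σ j < σ i) \ univ.filter (fun j => j < i) := by
      ext j
      simp only [mem_filter, mem_univ, true_and, mem_sdiff, not_lt]
      refine ⟨fun hj => ⟨hj.2, hj.1.le⟩, fun hj => ⟨lt_of_le_of_ne hj.2 ?_, hj.1⟩⟩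
      rintro rfl
      exact hj.1.false
    rw [card_filter_lt_and_le, hl, card_sdiff_of_subset (h.subset_of_lt_apply hi), card_filter_apply_lt,
      card_filter_lt]
  · rw [filter_false_of_mem, filter_false_of_mem]
    · exact fun m _ hm => (hm.1.trans_le hm.2).not_ge hi
    · exact fun j _ hj => hj.2.asymm (h.apply_lt_apply_of_apply_le hi hj.1)

end Avoids321

theorem card_filter_prod_eq_sum {α β : Type*} [Fintype α] [Fintype β] (p : α → β → Prop)
    [∀ a b, Decidable (p a b)] :
    #{q : α × β | p q.1 q.2} = ∑ a, #{b | p a b} := by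
  simp only [card_filter, Fintype.sum_prod_type]

theorem card_filter_prod_eq_sum_right {α β : Type*} [Fintype α] [Fintype β] (p : α → β → Prop)
    [∀ a b, Decidable (p a b)] :
    #{q : α × β | p q.1 q.2} = ∑ b, #{a | p a b} := by
  simp only [card_filter, Fintype.sum_prod_type_right]

theorem Avoids.invStat_eq_sum {n : ℕ} {σ : Equiv.Perm (Fin n)} (h : Avoids σ p321) :
    invStat σ = ∑ i, #{m | i < m ∧ m ≤ σ i} := by
  rw [invStat, card_filter_prod_eq_sum fun i j => i < j ∧ σ j < σ i]
  exact sum_congr rfl fun i _ => h.card_inversions_at i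

theorem Avoids.crs_eq_sum {n : ℕ} {σ : Equiv.Perm (Fin n)} (h : Avoids σ p321) :
    crs σ = ∑ m, #{i | i < m ∧ m < σ i} := by
  simp only [crs, Fin.val_fin_lt, Fin.val_fin_le]
  rw [filter_or, card_union_of_disjoint,
    card_filter_prod_eq_sum_right fun i j => i < j ∧ j < σ i ∧ σ i < σ j,
    card_filter_prod_eq_sum fun i j => σ i < σ j ∧ σ j ≤ i ∧ i < j, ← sum_add_distrib]
  · refine sum_congr rfl fun m _ => ?_
    rcases lt_or_ge m (σ m) with hm | hm
    · rw [filter_false_of_mem (p := fun j => σ m < σ j ∧ σ j ≤ m ∧ m < j), card_empty, add_zero]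
      · congr 1
        ext i
        simp only [mem_filter, mem_univ, true_and]
        exact ⟨fun hi => ⟨hi.1, hi.2.1⟩,
          fun hi => ⟨hi.1, hi.2, h.apply_lt_apply_of_lt_apply hm hi.1⟩⟩
      · exact fun j _ hj => (hj.1.trans_le hj.2.1).asymm hm
    · rw [filter_false_of_mem (p := fun i => i < m ∧ m < σ i ∧ σ i < σ m), card_empty, zero_add]
      · trans #{j | σ j ≤ m ∧ m < j}
        · congr 1
          ext j
          simp only [mem_filter, mem_univ, true_and]
          exact ⟨fun hj => hj.2, fun hj => ⟨h.apply_lt_apply_of_apply_le hm hj.2, hj⟩⟩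
        · rw [card_filter_le_lt_apply]
          congr 1
          ext i
          simp only [mem_filter, mem_univ, true_and]
          refine ⟨fun hi => ⟨lt_of_le_of_ne hi.1 ?_, hi.2⟩, fun hi => ⟨hi.1.le, hi.2⟩⟩
          rintro rfl
          exact hi.2.not_ge hm
      · exact fun i _ hi => (hi.2.1.trans hi.2.2).not_ge hm
  · rw [disjoint_filter]
    exact fun q _ hq hq' => (hq.1.trans (hq.2.1.trans hq.2.2)).not_ge hq'.2.1

/-- For a 321-avoiding permutation, `inv = crs + exc`. -/
theorem invStat_eq_crs_add_exc_of_avoids321 {n : ℕ} (σ : Equiv.Perm (Fin n))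
    (h : Avoids σ p321) : invStat σ = crs σ + exc σ := by
  rw [h.invStat_eq_sum, h.crs_eq_sum, ← card_filter_prod_eq_sum_right fun i m => i < m ∧ m < σ i,
    card_filter_prod_eq_sum fun i m => i < m ∧ m < σ i, exc, card_filter, ← sum_add_distrib]
  refine sum_congr rfl fun i _ => ?_
  have hr : #{m | i < m ∧ m < σ i} = (σ i : ℕ) - i - 1 := by
    rw [← Fin.card_Ioo]
    congr 1
    ext m
    simp
  rw [card_filter_lt_and_le, hr]
  split_ifs <;> omega
end

section
/- Let σ be a 132-avoiding permutation of [n] and T(σ) = {i ∈ [n] : i < σ(i) and i < σ^{−1}(i)}. Then: (a) T(σ) = ∅ if and only if σ(1) = 1; (b) if j ∈ T(σ) then every integer i with 1 ≤ i ≤ j satisfies i ∈ T(σ); (c) 2·|T(σ)| ≤ n; and (e) if k = 1 + |T(σ)|, then the permutation σ^{(k,k)} obtained by inserting the value k at position k is a 132-avoiding permutation of [n+1]. -/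
open Equiv Finset

/-- `T(σ) = {i : i < σ(i) and i < σ⁻¹(i)}`. -/
def Tset {n : ℕ} (σ : Equiv.Perm (Fin n)) : Finset (Fin n) :=
  Finset.univ.filter (fun i : Fin n => (i : ℕ) < σ i ∧ (i : ℕ) < σ⁻¹ i)

lemma Tset_card_lt {n : ℕ} (σ : Equiv.Perm (Fin n)) : (Tset σ).card < n + 1 :=
  Nat.lt_succ_of_le ((Finset.card_le_univ _).trans (by simp))

/-- `insertPerm π a b` is `π^{(a,b)}`, the permutation of `Fin (n+1)` obtained from
`π : Perm (Fin n)` by inserting the value `b` at position `a`. -/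
def insertPerm {n : ℕ} (π : Equiv.Perm (Fin n)) (a b : Fin (n + 1)) :
    Equiv.Perm (Fin (n + 1)) :=
  ((finSuccEquiv' a).trans (Equiv.optionCongr π)).trans (finSuccEquiv' b).symm

lemma avoids_p132_iff {n : ℕ} (σ : Equiv.Perm (Fin n)) :
    Avoids σ p132 ↔ ∀ a b c : Fin n, a < b → b < c → σ a < σ c → ¬ σ c < σ b := by
  constructor
  · intro h a b c hab hbc hac hcb
    refine h ⟨![a, b, c], ?_, ?_⟩
    · intro x y hxy
      fin_cases x <;> fin_cases y <;> simp_all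
      exact hab.trans hbc
    · have e0 : p132 0 = 0 := by decide
      have e1 : p132 1 = 2 := by decide
      have e2 : p132 2 = 1 := by decide
      intro x y
      fin_cases x <;> fin_cases y <;>
        simp [e0, e1, e2, hac, hcb, hac.trans hcb, hac.le, hcb.le, (hac.trans hcb).le]
  · rintro h ⟨f, hf, hiff⟩
    exact h (f 0) (f 1) (f 2) (hf (by decide)) (hf (by decide))
      ((hiff 0 2).2 (by decide)) ((hiff 2 1).2 (by decide))

lemma mem_Tset {n : ℕ} {σ : Equiv.Perm (Fin n)} {i : Fin n} :
    i ∈ Tset σ ↔ i < σ i ∧ i < σ⁻¹ i := by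
  simp [Tset]

lemma Tset_downward_closed {n : ℕ} {σ : Equiv.Perm (Fin n)} (h : Avoids σ p132)
    {i j : Fin n} (hj : j ∈ Tset σ) (hij : i ≤ j) : i ∈ Tset σ := by
  rcases hij.eq_or_lt with rfl | hij
  · exact hj
  rw [avoids_p132_iff] at h
  rw [mem_Tset] at hj ⊢
  constructor <;> by_contra! hle
  · exact h i j (σ⁻¹ j) hij hj.2 (by simpa using hle.trans_lt hij) (by simpa using hj.1)
  · have hpos : σ⁻¹ i < j := hle.trans_lt hij
    exact h (σ⁻¹ i) j (σ⁻¹ j) hpos hj.2 (by simpa using hij) (by simpa using hj.1)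

lemma mem_Tset_iff_lt_card {n : ℕ} {σ : Equiv.Perm (Fin n)} (h : Avoids σ p132)
    {i : Fin n} : i ∈ Tset σ ↔ (i : ℕ) < (Tset σ).card := by
  constructor
  · intro hi
    have hsub : Finset.Iic i ⊆ Tset σ := fun x hx =>
      Tset_downward_closed h hi (Finset.mem_Iic.1 hx)
    simpa using Finset.card_le_card hsub
  · intro hlt
    by_contra hi
    have hsub : Tset σ ⊆ Finset.Iio i := fun x hx => by
      rw [Finset.mem_Iio]
      by_contra! hle
      exact hi (Tset_downward_closed h hx hle)
    have := Finset.card_le_card hsub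
    simp only [Fin.card_Iio] at this
    omega

lemma card_Tset_le_apply {n : ℕ} {σ : Equiv.Perm (Fin n)} (h : Avoids σ p132)
    {i : Fin n} (hi : (i : ℕ) < (Tset σ).card) : (Tset σ).card ≤ σ i := by
  by_contra! hlt
  have h₁ := (mem_Tset.1 ((mem_Tset_iff_lt_card h).2 hi)).1
  have h₂ := (mem_Tset.1 ((mem_Tset_iff_lt_card h).2 hlt)).2
  exact lt_asymm h₁ (by simpa using h₂)

lemma two_mul_card_Tset_le {n : ℕ} {σ : Equiv.Perm (Fin n)} (h : Avoids σ p132) :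
    2 * (Tset σ).card ≤ n := by
  have hdisj : Disjoint (Tset σ) ((Tset σ).map σ.toEmbedding) := by
    rw [Finset.disjoint_left]
    intro x hx hx'
    obtain ⟨y, hy, rfl⟩ := Finset.mem_map.1 hx'
    exact (card_Tset_le_apply h ((mem_Tset_iff_lt_card h).1 hy)).not_gt
      ((mem_Tset_iff_lt_card h).1 hx)
  have := Finset.card_le_univ ((Tset σ).disjUnion _ hdisj)
  simp only [Finset.card_disjUnion, Finset.card_map, Fintype.card_fin] at this
  omega

lemma Tset_eq_empty_iff {n : ℕ} {σ : Equiv.Perm (Fin (n + 1))} (h : Avoids σ p132) :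
    Tset σ = ∅ ↔ σ 0 = 0 := by
  have h0 : (0 : Fin (n + 1)) ∈ Tset σ ↔ σ 0 ≠ 0 := by
    rw [mem_Tset, Fin.pos_iff_ne_zero, Fin.pos_iff_ne_zero, Ne, Ne, Equiv.Perm.inv_eq_iff_eq,
      eq_comm (a := (0 : Fin (n + 1))) (b := σ 0), and_self]
  constructor
  · intro he
    by_contra hne
    simpa [he] using h0.2 hne
  · intro hfix
    by_contra hne
    obtain ⟨j, hj⟩ := Finset.nonempty_iff_ne_empty.2 hne
    exact h0.1 (Tset_downward_closed h hj (Fin.zero_le j)) hfix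

@[simp]
lemma insertPerm_apply_self {n : ℕ} (π : Equiv.Perm (Fin n)) (a b : Fin (n + 1)) :
    insertPerm π a b a = b := by
  simp [insertPerm]

@[simp]
lemma insertPerm_apply_succAbove {n : ℕ} (π : Equiv.Perm (Fin n)) (a b : Fin (n + 1))
    (i : Fin n) : insertPerm π a b (a.succAbove i) = b.succAbove (π i) := by
  simp [insertPerm]

/-- Inserting a diagonal point `k` creates no 132 pattern, provided the first `k` values are
all at least `k` and `k` itself is not in `T(σ)`. -/
lemma avoids_insertPerm_diag {n : ℕ} {σ : Equiv.Perm (Fin n)} (h : Avoids σ p132)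
    (k : Fin (n + 1)) (hk : ∀ i : Fin n, (i : ℕ) < k → (k : ℕ) ≤ σ i)
    (hkT : ∀ i : Fin n, (i : ℕ) = k → i ∉ Tset σ) :
    Avoids (insertPerm σ k k) p132 := by
  rw [avoids_p132_iff] at h ⊢
  intro a b c hab hbc hac hcb
  rcases Fin.eq_self_or_eq_succAbove k a with rfl | ⟨p, rfl⟩
  · obtain ⟨q, rfl⟩ := Fin.exists_succAbove_eq hab.ne'
    obtain ⟨r, rfl⟩ := Fin.exists_succAbove_eq (hab.trans hbc).ne'
    simp only [insertPerm_apply_self, insertPerm_apply_succAbove, Fin.succAbove_lt_succAbove_iff,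
      Fin.lt_succAbove_iff_le_castSucc, Fin.le_def, Fin.val_castSucc] at hab hbc hac hcb
    obtain ⟨m, hma⟩ : ∃ m : Fin n, (m : ℕ) = a := ⟨⟨a, hab.trans_lt q.isLt⟩, rfl⟩
    have hm := hkT m hma
    rw [← hma] at hab hac
    rw [mem_Tset, not_and_or, not_lt, not_lt] at hm
    rcases hm with hm | hm
    · have hmq : m ≠ q := by
        rintro rfl
        exact absurd hm (not_le.2 (lt_of_le_of_lt (Fin.le_def.2 hac) hcb))
      have hmq' : m < q := lt_of_le_of_ne (Fin.le_def.2 hab) hmq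
      refine h m q r hmq' hbc (lt_of_le_of_ne (hm.trans (Fin.le_def.2 hac)) ?_) hcb
      exact fun he => (hmq'.trans hbc).ne (σ.injective he)
    · have hmq : σ⁻¹ m ≠ q := by
        rintro rfl
        exact absurd hcb (not_lt.2 (by simpa using Fin.le_def.2 hac))
      have hmq' : σ⁻¹ m < q := lt_of_le_of_ne (hm.trans (Fin.le_def.2 hab)) hmq
      refine h _ q r hmq' hbc (lt_of_le_of_ne ?_ ?_) hcb
      · simpa using Fin.le_def.2 hac
      · exact fun he => (hmq'.trans hbc).ne (σ.injective he)
  · have hp : ∀ x, k.succAbove p < k → insertPerm σ k k (k.succAbove p) < x → x ≤ k → False := by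
      intro x hpk hx hxk
      have hv := hx.trans_le hxk
      rw [insertPerm_apply_succAbove] at hv
      rw [Fin.succAbove_lt_iff_castSucc_lt, Fin.lt_def, Fin.val_castSucc] at hpk hv
      exact absurd (hk p hpk) (not_le.2 hv)
    rcases Fin.eq_self_or_eq_succAbove k b with rfl | ⟨q, rfl⟩
    · rw [insertPerm_apply_self] at hcb
      exact hp _ hab hac hcb.le
    rcases Fin.eq_self_or_eq_succAbove k c with rfl | ⟨r, rfl⟩
    · exact hp _ (hab.trans hbc) hac (insertPerm_apply_self σ c c).le
    simp only [insertPerm_apply_succAbove, Fin.succAbove_lt_succAbove_iff] at hab hbc hac hcb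
    exact h p q r hab hbc hac hcb

/-- For a 132-avoiding `σ` of `[n+1]` (0-indexed here):
(a) `T(σ) = ∅` iff `σ` fixes the first position;
(b) `T(σ)` is downward closed;
(c) `2|T(σ)| ≤ n+1`;
(e) inserting the value `|T(σ)|+1` at position `|T(σ)|+1` (1-indexed; here both are
the 0-indexed `|T(σ)|`) yields a 132-avoiding permutation of `[n+2]`. -/
theorem Tset_properties {n : ℕ} (σ : Equiv.Perm (Fin (n + 1))) (h : Avoids σ p132) :
    (Tset σ = ∅ ↔ σ 0 = 0) ∧
    (∀ j ∈ Tset σ, ∀ i : Fin (n + 1), i ≤ j → i ∈ Tset σ) ∧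
    (2 * (Tset σ).card ≤ n + 1) ∧
    Avoids (insertPerm σ ⟨(Tset σ).card, Tset_card_lt σ⟩
      ⟨(Tset σ).card, Tset_card_lt σ⟩) p132 := by
  exact ⟨Tset_eq_empty_iff h, fun _ hj _ hij => Tset_downward_closed h hj hij,
    two_mul_card_Tset_le h,
    avoids_insertPerm_diag h _ (fun _ hi => card_Tset_le_apply h hi)
      (fun _ hi hmem => ((mem_Tset_iff_lt_card h).1 hmem).ne hi)⟩
end
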